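/- Fix n, m, k ∈ ℕ with n ≥ 1 and a constant Γ > 1. Then there exist constants 0 < c ≤ C, depending only on n, k, m and Γ, with the following property: for every nondegenerate n-simplex T ⊂ ℝⁿ (the convex hull of n+1 affinely independent points) satisfying the shape-regularity condition diam(T) ≤ Γ · R_{i,T}, where R_{i,T} is the radius of the largest ball contained in T, and for all polynomials a₁, …, a_m on ℝⁿ of total degree at most k, one has c · ∏_{j=1}^m max_{T} |a_j| ≤ ⨍_T |∏_{j=1}^m a_j| dx ≤ C · ∏_{j=1}^m max_{T} |a_j|. -/

import Mathlib

open MeasureTheory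

/-!
Averages and maxima of polynomials are unchanged when `T` is carried by a homothety, and such a map
preserves total degrees, so the ball contained in `T` may be taken to be the unit ball; then
`ball 0 1 ⊆ T ⊆ closedBall 0 (max 1 Γ)`. On the finite-dimensional space of polynomials of degree
at most `k`, normed by the maximum over the larger ball, the functional
`(a₁, …, aₘ) ↦ ∫ |∏ⱼ aⱼ|` over the smaller ball is continuous and homogeneous in each `aⱼ`. It
vanishes only if the polynomial `∏ⱼ aⱼ` is zero on an open set, hence only if some `aⱼ` is zero.
Its minimum over the compact product of unit spheres is therefore a positive constant, which gives
the lower bound.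
-/

section MultiHomogeneous

variable {ι V : Type*} [Fintype ι] [NormedAddCommGroup V] [NormedSpace ℝ V] [ProperSpace V]

theorem exists_pos_forall_mul_prod_norm_le {F : (ι → V) → ℝ} (hF : Continuous F)
    (hsmul : ∀ (t : ι → ℝ) (v : ι → V), F (fun j => t j • v j) = (∏ j, |t j|) * F v)
    (hpos : ∀ v : ι → V, (∀ j, v j ≠ 0) → 0 < F v) :
    ∃ c : ℝ, 0 < c ∧ ∀ v : ι → V, c * ∏ j, ‖v j‖ ≤ F v := by
  have hK : IsCompact (Set.univ.pi fun _ : ι => Metric.sphere (0 : V) 1) :=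
    isCompact_univ_pi fun _ => isCompact_sphere _ _
  obtain ⟨c, hc, hmin⟩ := hK.exists_forall_le' hF.continuousOn fun u hu =>
    hpos u fun j => ne_zero_of_mem_unit_sphere ⟨u j, hu j (Set.mem_univ j)⟩
  refine ⟨c, hc, fun v => ?_⟩
  have hFv : F v = (∏ j, ‖v j‖) * F fun j => ‖v j‖⁻¹ • v j := by
    have hv : v = fun j => ‖v j‖ • ‖v j‖⁻¹ • v j := by
      funext j
      rcases eq_or_ne (v j) 0 with h | h
      · simp [h]
      · rw [smul_inv_smul₀ (norm_ne_zero_iff.2 h)]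
    conv_lhs => rw [hv, hsmul]
    simp only [abs_norm]
  rw [hFv, mul_comm c]
  by_cases hv : ∀ j, v j ≠ 0
  · gcongr
    exact hmin _ fun j _ => by simpa using norm_smul_inv_norm (𝕜 := ℝ) (hv j)
  · push Not at hv
    obtain ⟨j, hj⟩ := hv
    have hprod : ∏ j, ‖v j‖ = 0 := Finset.prod_eq_zero (Finset.mem_univ j) (norm_eq_zero.2 hj)
    simp only [hprod, zero_mul, le_refl]

theorem exists_pos_forall_mul_prod_norm_le_integral {X : Type*} [TopologicalSpace X]
    [CompactSpace X] [MeasurableSpace X] [BorelSpace X] (ν : Measure X) [IsFiniteMeasure ν]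
    (V : Submodule ℝ C(X, ℝ)) [FiniteDimensional ℝ V]
    (hV : ∀ f : ι → V, (∀ᵐ x ∂ν, ∏ j, (f j : C(X, ℝ)) x = 0) → ∃ j, f j = 0) :
    ∃ c : ℝ, 0 < c ∧ ∀ f : ι → V, c * ∏ j, ‖f j‖ ≤ ∫ x, |∏ j, (f j : C(X, ℝ)) x| ∂ν := by
  have : ProperSpace V := FiniteDimensional.proper_real V
  refine exists_pos_forall_mul_prod_norm_le ?_ (fun t f => ?_) fun f hf => ?_
  · have hcont : Continuous
        (Function.uncurry fun (f : ι → V) (x : X) => |∏ j, (f j : C(X, ℝ)) x|) := by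
      simp only [Function.uncurry_def]
      fun_prop
    simpa using continuous_parametric_integral_of_continuous (μ := ν) hcont isCompact_univ
  · simp only [Submodule.coe_smul, ContinuousMap.smul_apply, smul_eq_mul, Finset.prod_mul_distrib,
      abs_mul, Finset.abs_prod, integral_const_mul]
  · have hint : Integrable (fun x => |∏ j, (f j : C(X, ℝ)) x|) ν :=
      Continuous.integrable_of_hasCompactSupport (by fun_prop) (.of_compactSpace _)
    have hnonneg : 0 ≤ fun x => |∏ j, (f j : C(X, ℝ)) x| := fun x => abs_nonneg _
    refine (integral_nonneg hnonneg).lt_of_ne' fun hzero => ?_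
    have hae := (integral_eq_zero_iff_of_nonneg hnonneg hint).1 hzero
    obtain ⟨j, hj⟩ := hV f (hae.mono fun x hx => abs_eq_zero.1 hx)
    exact hf j hj

end MultiHomogeneous

section PolynomialFunctions

variable {σ : Type*}

theorem continuous_eval_ofLp (p : MvPolynomial σ ℝ) :
    Continuous fun x : EuclideanSpace ℝ σ => MvPolynomial.eval x.ofLp p :=
  p.continuous_eval.comp (PiLp.continuous_ofLp 2 _)

theorem continuous_abs_prod_eval {ι : Type*} [Fintype ι] (a : ι → MvPolynomial σ ℝ) :
    Continuous fun x : EuclideanSpace ℝ σ => |∏ j, MvPolynomial.eval x.ofLp (a j)| :=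
  (continuous_finsetProd _ fun j _ => continuous_eval_ofLp (a j)).abs

theorem eq_zero_of_eval_eq_zero_on_isOpen [Finite σ] {p : MvPolynomial σ ℝ}
    {U : Set (EuclideanSpace ℝ σ)} (hU : IsOpen U) (hUne : U.Nonempty)
    (hp : ∀ x ∈ U, MvPolynomial.eval x.ofLp p = 0) : p = 0 := by
  cases nonempty_fintype σ
  obtain ⟨z, hz⟩ := hUne
  have hanalytic : AnalyticOnNhd ℝ
      (fun x : EuclideanSpace ℝ σ => MvPolynomial.eval x.ofLp p) Set.univ :=
    .eval_continuousLinearMap (EuclideanSpace.equiv σ ℝ).toContinuousLinearMap p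
  have hzero := hanalytic.eq_of_eventuallyEq analyticOnNhd_const
    (Filter.eventuallyEq_of_mem (hU.mem_nhds hz) hp)
  exact MvPolynomial.funext fun y => by simpa using congrFun hzero (WithLp.toLp 2 y)

theorem exists_eq_zero_of_ae_prod_eval_eq_zero {ι : Type*} [Finite σ] [Fintype ι]
    (μ : Measure (EuclideanSpace ℝ σ)) [μ.IsOpenPosMeasure] {U : Set (EuclideanSpace ℝ σ)}
    (hU : IsOpen U) (hUne : U.Nonempty) {a : ι → MvPolynomial σ ℝ}
    (h : ∀ᵐ x ∂μ.restrict U, ∏ j, MvPolynomial.eval x.ofLp (a j) = 0) : ∃ j, a j = 0 := by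
  have hzero : Set.EqOn (fun x => ∏ j, MvPolynomial.eval x.ofLp (a j)) (fun _ => 0) U :=
    Measure.eqOn_open_of_ae_eq h hU
      (continuous_finsetProd _ fun j _ => continuous_eval_ofLp (a j)).continuousOn
      continuousOn_const
  have hprod : ∏ j, a j = 0 :=
    eq_zero_of_eval_eq_zero_on_isOpen hU hUne fun x hx => by simpa only [map_prod] using hzero hx
  simpa [Finset.prod_eq_zero_iff] using hprod

/-- The supremum of `|p|` over `T`, which is `max_T |p|` for nonempty compact `T`. It is `0` when
`T` is empty or `p` is unbounded on `T`. -/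
noncomputable def supAbs (T : Set (EuclideanSpace ℝ σ)) (p : MvPolynomial σ ℝ) : ℝ :=
  sSup ((fun x => |MvPolynomial.eval x.ofLp p|) '' T)

theorem supAbs_nonneg (T : Set (EuclideanSpace ℝ σ)) (p : MvPolynomial σ ℝ) : 0 ≤ supAbs T p :=
  Real.sSup_nonneg <| Set.forall_mem_image.2 fun _ _ => abs_nonneg _

theorem supAbs_le {T : Set (EuclideanSpace ℝ σ)} {p : MvPolynomial σ ℝ} {M : ℝ} (hM : 0 ≤ M)
    (h : ∀ x ∈ T, |MvPolynomial.eval x.ofLp p| ≤ M) : supAbs T p ≤ M :=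
  Real.sSup_le (Set.forall_mem_image.2 h) hM

theorem abs_eval_le_supAbs [Finite σ] {T : Set (EuclideanSpace ℝ σ)}
    (hT : Bornology.IsBounded T) (p : MvPolynomial σ ℝ) {x : EuclideanSpace ℝ σ} (hx : x ∈ T) :
    |MvPolynomial.eval x.ofLp p| ≤ supAbs T p := by
  cases nonempty_fintype σ
  have hbdd : BddAbove ((fun x => |MvPolynomial.eval x.ofLp p|) '' closure T) :=
    hT.isCompact_closure.bddAbove_image (continuous_eval_ofLp p).abs.continuousOn
  exact le_csSup (hbdd.mono (Set.image_mono subset_closure)) (Set.mem_image_of_mem _ hx)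

theorem integrableOn_abs_prod_eval {ι : Type*} [Finite σ] [Fintype ι]
    (μ : Measure (EuclideanSpace ℝ σ)) [IsFiniteMeasureOnCompacts μ]
    {T : Set (EuclideanSpace ℝ σ)} (hT : Bornology.IsBounded T)
    (a : ι → MvPolynomial σ ℝ) :
    IntegrableOn (fun x => |∏ j, MvPolynomial.eval x.ofLp (a j)|) T μ := by
  cases nonempty_fintype σ
  exact ((continuous_abs_prod_eval a).continuousOn.integrableOn_compact
    hT.isCompact_closure).mono_set subset_closure

theorem setAverage_abs_prod_eval_le {ι : Type*} [Finite σ] [Fintype ι]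
    (μ : Measure (EuclideanSpace ℝ σ)) [IsFiniteMeasureOnCompacts μ]
    {T : Set (EuclideanSpace ℝ σ)} (hT : Bornology.IsBounded T)
    (a : ι → MvPolynomial σ ℝ) :
    ⨍ x in T, |∏ j, MvPolynomial.eval x.ofLp (a j)| ∂μ ≤ ∏ j, supAbs T (a j) := by
  cases nonempty_fintype σ
  have hbound : ∀ x ∈ T, ‖|∏ j, MvPolynomial.eval x.ofLp (a j)|‖ ≤ ∏ j, supAbs T (a j) := by
    intro x hx
    rw [Real.norm_eq_abs, abs_abs, Finset.abs_prod]
    exact Finset.prod_le_prod (fun _ _ => abs_nonneg _) fun j _ => abs_eval_le_supAbs hT (a j) hx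
  have hint := (le_abs_self _).trans
    (norm_setIntegral_le_of_norm_le_const (hT.measure_lt_top (μ := μ)) hbound)
  rw [setAverage_eq, smul_eq_mul]
  exact inv_mul_le_of_le_mul₀ measureReal_nonneg
    (Finset.prod_nonneg fun j _ => supAbs_nonneg T (a j)) (by rwa [mul_comm] at hint)

/-- Restriction of polynomial functions to `K`, as a map into the algebra of continuous functions,
whose supremum norm (for compact `K`) serves as the norm on polynomials. -/
noncomputable def polynomialRestrict (K : Set (EuclideanSpace ℝ σ)) :
    MvPolynomial σ ℝ →ₐ[ℝ] C(K, ℝ) :=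
  MvPolynomial.aeval fun i => ⟨fun x => x.1 i, by fun_prop⟩

theorem polynomialRestrict_apply (K : Set (EuclideanSpace ℝ σ)) (p : MvPolynomial σ ℝ) (x : K) :
    polynomialRestrict K p x = MvPolynomial.eval x.1.ofLp p := by
  have h : (ContinuousMap.evalAlgHom ℝ ℝ x).comp (polynomialRestrict K) =
      MvPolynomial.aeval x.1.ofLp := by
    ext i
    simp [polynomialRestrict]
  exact (DFunLike.congr_fun h p).trans (by rw [MvPolynomial.aeval_eq_eval])

theorem supAbs_le_norm_polynomialRestrict (K : Set (EuclideanSpace ℝ σ)) [CompactSpace K]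
    (p : MvPolynomial σ ℝ) : supAbs K p ≤ ‖polynomialRestrict K p‖ :=
  supAbs_le (norm_nonneg _) fun x hx => by
    simpa only [polynomialRestrict_apply, Real.norm_eq_abs] using
      (polynomialRestrict K p).norm_coe_le_norm ⟨x, hx⟩

end PolynomialFunctions

section FixedDomain

variable {σ ι : Type*} [Finite σ] [Fintype ι] (μ : Measure (EuclideanSpace ℝ σ))
  [IsFiniteMeasureOnCompacts μ] [μ.IsOpenPosMeasure] (W : Submodule ℝ (MvPolynomial σ ℝ))
  [FiniteDimensional ℝ W] {K U : Set (EuclideanSpace ℝ σ)}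

theorem exists_pos_forall_mul_prod_supAbs_le_setIntegral (hK : IsCompact K) (hU : IsOpen U)
    (hUne : U.Nonempty) (hUK : U ⊆ K) :
    ∃ c : ℝ, 0 < c ∧ ∀ a : ι → MvPolynomial σ ℝ, (∀ j, a j ∈ W) →
      c * ∏ j, supAbs K (a j) ≤ ∫ x in U, |∏ j, MvPolynomial.eval x.ofLp (a j)| ∂μ := by
  cases nonempty_fintype σ
  have : CompactSpace K := isCompact_iff_compactSpace.1 hK
  have : IsFiniteMeasure (μ.restrict U) :=
    isFiniteMeasure_restrict.2 (measure_ne_top_of_subset hUK hK.measure_ne_top)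
  have hemb := MeasurableEmbedding.subtype_coe hK.measurableSet
  set ν : Measure K := (μ.restrict U).comap Subtype.val
  have hν : ν.map Subtype.val = μ.restrict U := by
    rw [map_comap_subtype_coe hK.measurableSet, Measure.restrict_restrict hK.measurableSet,
      Set.inter_eq_right.2 hUK]
  obtain ⟨c, hc, hle⟩ := exists_pos_forall_mul_prod_norm_le_integral (ι := ι) ν
    (W.map (polynomialRestrict K).toLinearMap) fun f hf => by
      choose a _ ha using fun j => (f j).2
      simp only [← ha, AlgHom.toLinearMap_apply, polynomialRestrict_apply] at hf
      rw [← hemb.ae_map_iff (p := fun x => ∏ j, MvPolynomial.eval x.ofLp (a j) = 0), hν] at hf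
      obtain ⟨j, hj⟩ := exists_eq_zero_of_ae_prod_eval_eq_zero μ hU hUne hf
      exact ⟨j, Subtype.ext <| by rw [← ha j, hj, map_zero, ZeroMemClass.coe_zero]⟩
  refine ⟨c, hc, fun a ha => ?_⟩
  calc c * ∏ j, supAbs K (a j)
      ≤ c * ∏ j, ‖polynomialRestrict K (a j)‖ := by
        gcongr with j
        · exact fun j _ => supAbs_nonneg K (a j)
        · exact supAbs_le_norm_polynomialRestrict K (a j)
    _ ≤ ∫ x, |∏ j, polynomialRestrict K (a j) x| ∂ν :=
        hle fun j => ⟨polynomialRestrict K (a j), Submodule.mem_map_of_mem (ha j)⟩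
    _ = ∫ x in U, |∏ j, MvPolynomial.eval x.ofLp (a j)| ∂μ := by
        rw [← hν, hemb.integral_map]
        simp only [polynomialRestrict_apply]

theorem exists_pos_forall_mul_prod_supAbs_le_setAverage (hK : IsCompact K) (hU : IsOpen U)
    (hUne : U.Nonempty) (hUK : U ⊆ K) :
    ∃ c : ℝ, 0 < c ∧ ∀ S : Set (EuclideanSpace ℝ σ), U ⊆ S → S ⊆ K →
      ∀ a : ι → MvPolynomial σ ℝ, (∀ j, a j ∈ W) →
        c * ∏ j, supAbs S (a j) ≤ ⨍ x in S, |∏ j, MvPolynomial.eval x.ofLp (a j)| ∂μ := by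
  cases nonempty_fintype σ
  obtain ⟨c, hc, hle⟩ :=
    exists_pos_forall_mul_prod_supAbs_le_setIntegral (ι := ι) μ W hK hU hUne hUK
  have hpos {S : Set (EuclideanSpace ℝ σ)} (hUS : U ⊆ S) (hSK : S ⊆ K) : 0 < μ.real S :=
    ENNReal.toReal_pos ((hU.measure_pos μ hUne).trans_le (measure_mono hUS)).ne'
      (measure_ne_top_of_subset hSK hK.measure_ne_top)
  refine ⟨(μ.real K)⁻¹ * c, mul_pos (inv_pos.2 (hpos hUK subset_rfl)) hc, fun S hUS hSK a ha => ?_⟩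
  have hS := hK.isBounded.subset hSK
  have hsup (j : ι) : supAbs S (a j) ≤ supAbs K (a j) :=
    supAbs_le (supAbs_nonneg K (a j)) fun x hx => abs_eval_le_supAbs hK.isBounded (a j) (hSK hx)
  have hμS := hpos hUS hSK
  have hμSK : μ.real S ≤ μ.real K := measureReal_mono hSK hK.measure_ne_top
  calc (μ.real K)⁻¹ * c * ∏ j, supAbs S (a j)
      ≤ (μ.real K)⁻¹ * c * ∏ j, supAbs K (a j) := by
        gcongr with j
        · exact fun j _ => supAbs_nonneg S (a j)
        · exact hsup j
    _ = (μ.real K)⁻¹ * (c * ∏ j, supAbs K (a j)) := mul_assoc _ _ _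
    _ ≤ (μ.real K)⁻¹ * ∫ x in U, |∏ j, MvPolynomial.eval x.ofLp (a j)| ∂μ := by
        gcongr
        exact hle a ha
    _ ≤ (μ.real K)⁻¹ * ∫ x in S, |∏ j, MvPolynomial.eval x.ofLp (a j)| ∂μ := by
        gcongr ?_ * ?_
        exact setIntegral_mono_set (integrableOn_abs_prod_eval μ hS a)
          (.of_forall fun x => abs_nonneg _) (.of_forall hUS)
    _ ≤ (μ.real S)⁻¹ * ∫ x in S, |∏ j, MvPolynomial.eval x.ofLp (a j)| ∂μ := by
        gcongr
    _ = ⨍ x in S, |∏ j, MvPolynomial.eval x.ofLp (a j)| ∂μ := by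
        rw [setAverage_eq, smul_eq_mul]

end FixedDomain

section Rescaling

theorem setAverage_preimage_add_smul {E F : Type*} [NormedAddCommGroup E] [NormedSpace ℝ E]
    [FiniteDimensional ℝ E] [MeasurableSpace E] [BorelSpace E] [NormedAddCommGroup F]
    [NormedSpace ℝ F] (μ : Measure E) [μ.IsAddHaarMeasure] (z : E) {r : ℝ} (hr : r ≠ 0)
    (f : E → F) (T : Set E) :
    ⨍ y in (fun y => z + r • y) ⁻¹' T, f (z + r • y) ∂μ = ⨍ x in T, f x ∂μ := by
  have hemb : MeasurableEmbedding fun y : E => z + r • y :=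
    (measurableEmbedding_addLeft z).comp (measurableEmbedding_const_smul₀ hr)
  obtain ⟨s, hs, hs', hmap⟩ :
      ∃ s : ENNReal, s ≠ 0 ∧ s ≠ ⊤ ∧ μ.map (fun y => z + r • y) = s • μ := by
    refine ⟨ENNReal.ofReal |(r ^ Module.finrank ℝ E)⁻¹|, by positivity, ENNReal.ofReal_ne_top, ?_⟩
    rw [← Measure.map_addHaar_smul μ hr, ← Function.comp_def (z + ·) (r • ·),
      ← Measure.map_map (measurable_const_add z) (measurable_const_smul r),
      Measure.map_addHaar_smul μ hr, Measure.map_smul, map_add_left_eq_self]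
  have hs₀ : s.toReal ≠ 0 := ENNReal.toReal_ne_zero.2 ⟨hs, hs'⟩
  calc ⨍ y in (fun y => z + r • y) ⁻¹' T, f (z + r • y) ∂μ
      = ⨍ x in T, f x ∂(μ.map fun y => z + r • y) := by
        rw [setAverage_eq, setAverage_eq, hemb.setIntegral_map, measureReal_def, measureReal_def,
          hemb.map_apply]
    _ = ⨍ x in T, f x ∂μ := by
        rw [hmap, setAverage_eq, setAverage_eq, Measure.restrict_smul, integral_smul_measure,
          measureReal_ennreal_smul_apply, smul_smul, mul_inv_rev, inv_mul_cancel_right₀ hs₀]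

theorem totalDegree_bind₁_le {σ τ R : Type*} [CommSemiring R] {g : σ → MvPolynomial τ R} {d : ℕ}
    (hg : ∀ i, (g i).totalDegree ≤ d) (p : MvPolynomial σ R) :
    (MvPolynomial.bind₁ g p).totalDegree ≤ p.totalDegree * d := by
  rw [← MvPolynomial.aeval_eq_bind₁, MvPolynomial.aeval_def, MvPolynomial.eval₂_eq]
  refine MvPolynomial.totalDegree_finsetSum_le fun e he => ?_
  calc _ ≤ (∏ i ∈ e.support, g i ^ e i).totalDegree :=
        (MvPolynomial.totalDegree_mul _ _).trans_eq <| by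
          rw [MvPolynomial.algebraMap_eq, MvPolynomial.totalDegree_C, zero_add]
    _ ≤ ∑ i ∈ e.support, (g i ^ e i).totalDegree := MvPolynomial.totalDegree_finsetProd _ _
    _ ≤ ∑ i ∈ e.support, e i * d := Finset.sum_le_sum fun i _ =>
        (MvPolynomial.totalDegree_pow _ _).trans (Nat.mul_le_mul_left _ (hg i))
    _ = (e.sum fun _ n => n) * d := (Finset.sum_mul _ _ _).symm
    _ ≤ p.totalDegree * d := Nat.mul_le_mul_right _ (MvPolynomial.le_totalDegree he)

variable {σ : Type*}

/-- The polynomial `y ↦ p (z + r • y)`, obtained by substituting `zᵢ + r Xᵢ` for `Xᵢ`. -/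
noncomputable def rescale (z : EuclideanSpace ℝ σ) (r : ℝ) (p : MvPolynomial σ ℝ) :
    MvPolynomial σ ℝ :=
  MvPolynomial.bind₁ (fun i => MvPolynomial.C (z i) + MvPolynomial.C r * MvPolynomial.X i) p

theorem eval_rescale (z : EuclideanSpace ℝ σ) (r : ℝ) (p : MvPolynomial σ ℝ)
    (y : EuclideanSpace ℝ σ) :
    MvPolynomial.eval y.ofLp (rescale z r p) = MvPolynomial.eval (z + r • y).ofLp p := by
  rw [rescale, MvPolynomial.eval, MvPolynomial.eval₂Hom_bind₁]
  congr 2 with i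
  simp

theorem totalDegree_rescale_le (z : EuclideanSpace ℝ σ) (r : ℝ) (p : MvPolynomial σ ℝ) :
    (rescale z r p).totalDegree ≤ p.totalDegree := by
  refine (totalDegree_bind₁_le (d := 1) (fun i => ?_) p).trans_eq (mul_one _)
  refine (MvPolynomial.totalDegree_add _ _).trans (max_le (by simp) ?_)
  exact (MvPolynomial.totalDegree_mul _ _).trans (by simp)

theorem supAbs_preimage_rescale (z : EuclideanSpace ℝ σ) {r : ℝ} (hr : r ≠ 0)
    (T : Set (EuclideanSpace ℝ σ)) (p : MvPolynomial σ ℝ) :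
    supAbs ((fun y => z + r • y) ⁻¹' T) (rescale z r p) = supAbs T p := by
  have hsurj : Function.Surjective fun y : EuclideanSpace ℝ σ => z + r • y :=
    (add_left_surjective z).comp (MulAction.surjective₀ hr)
  rw [supAbs, supAbs, ← Set.image_preimage_eq T hsurj, Set.image_image]
  simp only [eval_rescale, Set.image_preimage_eq T hsurj]

end Rescaling

theorem polynomial_product_average_on_simplex_general {σ ι : Type*} [Fintype σ] [Fintype ι]
    (μ : Measure (EuclideanSpace ℝ σ)) [μ.IsAddHaarMeasure] (k : ℕ) (Γ : ℝ) :
    ∃ c : ℝ, 0 < c ∧ c ≤ 1 ∧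
      ∀ T : Set (EuclideanSpace ℝ σ), Bornology.IsBounded T →
        (∃ (z : EuclideanSpace ℝ σ) (r : ℝ), 0 < r ∧
          Metric.closedBall z r ⊆ T ∧ Metric.diam T ≤ Γ * r) →
        ∀ a : ι → MvPolynomial σ ℝ, (∀ j, (a j).totalDegree ≤ k) →
          c * ∏ j, supAbs T (a j) ≤ ⨍ x in T, |∏ j, MvPolynomial.eval x.ofLp (a j)| ∂μ ∧
            ⨍ x in T, |∏ j, MvPolynomial.eval x.ofLp (a j)| ∂μ ≤ ∏ j, supAbs T (a j) := by
  obtain ⟨c, hc, hlower⟩ := exists_pos_forall_mul_prod_supAbs_le_setAverage (ι := ι) μ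
    (MvPolynomial.restrictTotalDegree σ ℝ k) (isCompact_closedBall 0 (max 1 Γ)) Metric.isOpen_ball
    (Metric.nonempty_ball.2 one_pos) (Metric.ball_subset_closedBall.trans
      (Metric.closedBall_subset_closedBall (le_max_left 1 Γ)))
  refine ⟨min c 1, by positivity, min_le_right _ _, fun T hT ⟨z, r, hr, hball, hdiam⟩ a ha =>
    ⟨?_, setAverage_abs_prod_eval_le μ hT a⟩⟩
  have hsub : Metric.ball 0 1 ⊆ (fun y => z + r • y) ⁻¹' T := fun y hy => hball <| by
    rw [mem_ball_zero_iff] at hy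
    rw [mem_closedBall_iff_norm, add_sub_cancel_left, norm_smul, Real.norm_of_nonneg hr.le]
    exact mul_le_of_le_one_right hr.le hy.le
  have hsuper : (fun y => z + r • y) ⁻¹' T ⊆ Metric.closedBall 0 (max 1 Γ) := fun y hy => by
    have hdist := Metric.dist_le_diam_of_mem hT hy (hball (Metric.mem_closedBall_self hr.le))
    rw [dist_eq_norm, add_sub_cancel_left, norm_smul, Real.norm_of_nonneg hr.le] at hdist
    have hy : ‖y‖ ≤ Γ := le_of_mul_le_mul_left ((hdist.trans hdiam).trans_eq (mul_comm Γ r)) hr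
    exact mem_closedBall_zero_iff.2 (hy.trans (le_max_right 1 Γ))
  have h := hlower _ hsub hsuper (fun j => rescale z r (a j)) fun j =>
    (MvPolynomial.mem_restrictTotalDegree _ _ _).2 ((totalDegree_rescale_le z r (a j)).trans (ha j))
  simp only [supAbs_preimage_rescale z hr.ne', eval_rescale] at h
  rw [setAverage_preimage_add_smul μ z hr.ne'
    (fun x => |∏ j, MvPolynomial.eval x.ofLp (a j)|)] at h
  refine le_trans ?_ h
  gcongr
  · exact Finset.prod_nonneg fun j _ => supAbs_nonneg T (a j)
  · exact min_le_left _ _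

/-- Equivalence of the product of sup-norms and the average of the product for
polynomials of bounded degree on shape-regular simplices: for fixed `n ≥ 1`,
degrees `≤ k`, `m` factors and shape-regularity parameter `Γ > 1`, there are
constants `0 < c ≤ C` (depending only on `n, k, m, Γ`) such that for every
nondegenerate `n`-simplex `T ⊆ ℝⁿ` with `diam T ≤ Γ · R_{i,T}` (witnessed by a
closed ball of radius `r` inside `T` with `diam T ≤ Γ r`) and all polynomials
`a₁, …, a_m` of total degree at most `k`,
`c ∏ⱼ max_T |aⱼ| ≤ ⨍_T |∏ⱼ aⱼ| ≤ C ∏ⱼ max_T |aⱼ|`. -/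
theorem polynomial_product_average_on_simplex
    (n m k : ℕ) (Γ : ℝ) (hn : 1 ≤ n) (hΓ : 1 < Γ) :
    ∃ c C : ℝ, 0 < c ∧ c ≤ C ∧
      ∀ (p : Fin (n + 1) → EuclideanSpace ℝ (Fin n)),
        AffineIndependent ℝ p →
        ∀ T : Set (EuclideanSpace ℝ (Fin n)),
          T = convexHull ℝ (Set.range p) →
          -- shape regularity: `diam T ≤ Γ * r` for a ball of radius `r` inside `T`
          (∃ (z : EuclideanSpace ℝ (Fin n)) (r : ℝ), 0 < r ∧
            Metric.closedBall z r ⊆ T ∧ Metric.diam T ≤ Γ * r) →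
          ∀ a : Fin m → MvPolynomial (Fin n) ℝ,
            (∀ j, (a j).totalDegree ≤ k) →
            c * ∏ j, sSup ((fun x => |MvPolynomial.eval (fun i => x i) (a j)|) '' T) ≤
                ⨍ x in T, |∏ j, MvPolynomial.eval (fun i => x i) (a j)| ∧
              ⨍ x in T, |∏ j, MvPolynomial.eval (fun i => x i) (a j)| ≤
                C * ∏ j, sSup ((fun x => |MvPolynomial.eval (fun i => x i) (a j)|) '' T) := by
  obtain ⟨c, hc, hc1, h⟩ := polynomial_product_average_on_simplex_general
    (σ := Fin n) (ι := Fin m) volume k Γ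
  exact ⟨c, 1, hc, hc1, fun p _ T hT hreg a ha => by
    simpa only [one_mul] using! h T
      (hT ▸ isBounded_convexHull.2 (Set.finite_range p).isBounded) hreg a ha⟩
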